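/- arXiv:1910.09829 — 3 statements merged into one kernel-verified Lean document; each statement's English description precedes it below -/
import Mathlib

section
/- Conditions D2w and C4 together imply conditions D0 and D2: if a reduction function r on an LSTS satisfies D2w and C4 at a state s, then it satisfies D0 and D2 at s. -/
open scoped Classical

/-- The subsequence of an `Option`-valued sequence consisting of the values at the
indices satisfying `P`, in increasing order (`none` past the end when only finitely
many indices satisfy `P`). -/
noncomputable def subseq {α : Type*} (g : ℕ → Option α) (P : ℕ → Prop) : ℕ → Option α :=
  fun k => if {i | P i}.Infinite ∨ k < {i | P i}.ncard then g (Nat.nth P k) else none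

/-- The no-stutter trace of a sequence of labels (`none` marking positions past the end
of a finite sequence): the subsequence of those values at indices `i` such that `i = 0`
or the value differs from the one at `i - 1`. -/
noncomputable def nsTrace {α : Type*} (g : ℕ → Option α) : ℕ → Option α :=
  subseq g fun i => (g i).isSome ∧ (i = 0 ∨ g i ≠ g (i - 1))

/-- A (finite or infinite) path of a transition relation `Tr`.  `len` is the number of
transitions (`⊤` for an infinite path); the values of `states` and `acts` beyond the
length are irrelevant junk. -/
structure TPath {S : Type*} {A : Type*} (Tr : S → A → S → Prop) where
  states : ℕ → S
  acts : ℕ → A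
  len : ℕ∞
  valid : ∀ i : ℕ, (i : ℕ∞) < len → Tr (states i) (acts i) (states (i + 1))

/-- The sequence of state labels along a path (`none` beyond the end). -/
noncomputable def TPath.labelSeq {S A l : Type*}
    {Tr : S → A → S → Prop} (p : TPath Tr) (L : S → Set l) : ℕ → Option (Set l) :=
  fun i => if (i : ℕ∞) ≤ p.len then some (L (p.states i)) else none

/-- The sequence of actions along a path (`none` beyond the end). -/
noncomputable def TPath.actSeq {S A : Type*}
    {Tr : S → A → S → Prop} (p : TPath Tr) : ℕ → Option A :=
  fun i => if (i : ℕ∞) < p.len then some (p.acts i) else none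

/-- Stutter equivalence of two paths with respect to labellings `L₁`, `L₂`:
both are finite or both are infinite, and they have the same no-stutter trace. -/
def StutterEquiv {S₁ A₁ S₂ A₂ l : Type*}
    {Tr₁ : S₁ → A₁ → S₁ → Prop} {Tr₂ : S₂ → A₂ → S₂ → Prop}
    (L₁ : S₁ → Set l) (L₂ : S₂ → Set l) (p : TPath Tr₁) (q : TPath Tr₂) : Prop :=
  (p.len = ⊤ ↔ q.len = ⊤) ∧ nsTrace (p.labelSeq L₁) = nsTrace (q.labelSeq L₂)

/-- Weak equivalence of two paths with respect to a set `I` of invisible actions: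
both are finite or both are infinite, and the projections of their action sequences
onto the visible actions (those not in `I`) are equal. -/
def WeakEquiv {S₁ S₂ A : Type*}
    {Tr₁ : S₁ → A → S₁ → Prop} {Tr₂ : S₂ → A → S₂ → Prop}
    (I : Set A) (p : TPath Tr₁) (q : TPath Tr₂) : Prop :=
  (p.len = ⊤ ↔ q.len = ⊤) ∧
    subseq p.actSeq (fun i => (i : ℕ∞) < p.len ∧ p.acts i ∉ I) =
      subseq q.actSeq (fun i => (i : ℕ∞) < q.len ∧ q.acts i ∉ I)

/-- A finite run of length `n` along `Tr`: `σ 0 -α 0→ σ 1 -α 1→ ⋯ -α (n-1)→ σ n`. -/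
def FinRun {S A : Type*} (Tr : S → A → S → Prop) (n : ℕ) (σ : ℕ → S) (α : ℕ → A) : Prop :=
  ∀ i < n, Tr (σ i) (α i) (σ (i + 1))

/-- `a` is a key action in `s` w.r.t. the reduction function `r`: for all
`a₁, …, aₙ ∉ r s` and paths `s -a₁…aₙ→ s'`, the action `a` is enabled in `s'`. -/
def KeyAction {S A : Type*} (Tr : S → A → S → Prop) (r : S → Set A) (s : S) (a : A) : Prop :=
  ∀ (n : ℕ) (σ : ℕ → S) (α : ℕ → A), σ 0 = s → FinRun Tr n σ α →
    (∀ i < n, α i ∉ r s) → ∃ t, Tr (σ n) a t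

/-- Condition D0: if some action is enabled in `s`, then `r s` contains an enabled action. -/
def CondD0 {S A : Type*} (Tr : S → A → S → Prop) (r : S → Set A) (s : S) : Prop :=
  (∃ a t, Tr s a t) → ∃ a ∈ r s, ∃ t, Tr s a t

/-- Condition D1. -/
def CondD1 {S A : Type*} (Tr : S → A → S → Prop) (r : S → Set A) (s : S) : Prop :=
  ∀ a ∈ r s, ∀ (n : ℕ) (σ : ℕ → S) (α : ℕ → A) (sn' : S),
    σ 0 = s → FinRun Tr n σ α → (∀ i < n, α i ∉ r s) → Tr (σ n) a sn' →
    ∃ σ' : ℕ → S, Tr s a (σ' 0) ∧ FinRun Tr n σ' α ∧ σ' n = sn'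

/-- Condition D1' (strengthened D1): additionally, if `a` is invisible then
`sᵢ -a→ s'ᵢ` for every `1 ≤ i < n`. -/
def CondD1' {S A : Type*} (Tr : S → A → S → Prop) (I : Set A) (r : S → Set A) (s : S) : Prop :=
  ∀ a ∈ r s, ∀ (n : ℕ) (σ : ℕ → S) (α : ℕ → A) (sn' : S),
    σ 0 = s → FinRun Tr n σ α → (∀ i < n, α i ∉ r s) → Tr (σ n) a sn' →
    ∃ σ' : ℕ → S, Tr s a (σ' 0) ∧ FinRun Tr n σ' α ∧ σ' n = sn' ∧
      (a ∈ I → ∀ i, 1 ≤ i → i < n → Tr (σ i) a (σ' i))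

/-- Condition D2: every enabled action of `r s` is a key action in `s`. -/
def CondD2 {S A : Type*} (Tr : S → A → S → Prop) (r : S → Set A) (s : S) : Prop :=
  ∀ a ∈ r s, (∃ t, Tr s a t) → KeyAction Tr r s a

/-- Condition D2w: if some action is enabled in `s`, then `r s` contains a key action. -/
def CondD2w {S A : Type*} (Tr : S → A → S → Prop) (r : S → Set A) (s : S) : Prop :=
  (∃ a t, Tr s a t) → ∃ a ∈ r s, KeyAction Tr r s a

/-- Condition V: if `r s` contains an enabled visible action, it contains all visible
actions. -/
def CondV {S A : Type*} (Tr : S → A → S → Prop) (I : Set A) (r : S → Set A) (s : S) : Prop :=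
  (∃ a ∈ r s, a ∉ I ∧ ∃ t, Tr s a t) → ∀ a, a ∉ I → a ∈ r s

/-- Condition I: if an invisible action is enabled in `s`, then `r s` contains an
invisible key action. -/
def CondI {S A : Type*} (Tr : S → A → S → Prop) (I : Set A) (r : S → Set A) (s : S) : Prop :=
  (∃ a ∈ I, ∃ t, Tr s a t) → ∃ a ∈ r s, a ∈ I ∧ KeyAction Tr r s a

/-- The states of the reduced LSTS: the smallest set of states containing the initial
state `s0` and closed under transitions labelled with actions of the stubborn set. -/
inductive RedReach {S A : Type*} (Tr : S → A → S → Prop) (r : S → Set A) (s0 : S) : S → Prop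
  | refl : RedReach Tr r s0 s0
  | step {s a t} : RedReach Tr r s0 s → a ∈ r s → Tr s a t → RedReach Tr r s0 t

/-- The transition relation of the reduced LSTS. -/
def RedTr {S A : Type*} (Tr : S → A → S → Prop) (r : S → Set A) (s0 : S) :
    S → A → S → Prop :=
  fun s a t => RedReach Tr r s0 s ∧ a ∈ r s ∧ Tr s a t

/-- Condition L: for every visible action `a`, every cycle in the reduced LSTS
contains a state `s` with `a ∈ r s`. -/
def CondL {S A : Type*} (Tr : S → A → S → Prop) (I : Set A) (r : S → Set A) (s0 : S) : Prop :=
  ∀ a ∉ I, ∀ (n : ℕ) (σ : ℕ → S) (α : ℕ → A), 0 < n →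
    FinRun (RedTr Tr r s0) n σ α → σ n = σ 0 → ∃ i < n, a ∈ r (σ i)

/-- Condition C4: either `r s` consists of all actions, or `r s` contains precisely one
enabled action. -/
def CondC4 {S A : Type*} (Tr : S → A → S → Prop) (r : S → Set A) (s : S) : Prop :=
  r s = Set.univ ∨ ∃! a, a ∈ r s ∧ ∃ t, Tr s a t

/-- `I` is a set of invisible actions w.r.t. the labelling `L`. -/
def InvisibleSet {S A l : Type*} (Tr : S → A → S → Prop) (L : S → Set l) (I : Set A) : Prop :=
  ∀ a ∈ I, ∀ s t, Tr s a t → L s = L t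

/-- Reachability along `Tr`. -/
inductive Reach {S A : Type*} (Tr : S → A → S → Prop) (s0 : S) : S → Prop
  | refl : Reach Tr s0 s0
  | step {s a t} : Reach Tr s0 s → Tr s a t → Reach Tr s0 t

/-- Stutter-trace equivalence of two systems: for every initial path of the one there
is a stutter equivalent initial path of the other, and vice versa. -/
def StutterTraceEquiv {S₁ A₁ S₂ A₂ l : Type*} (Tr₁ : S₁ → A₁ → S₁ → Prop) (i₁ : S₁)
    (L₁ : S₁ → Set l) (Tr₂ : S₂ → A₂ → S₂ → Prop) (i₂ : S₂) (L₂ : S₂ → Set l) : Prop :=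
  (∀ p : TPath Tr₁, p.states 0 = i₁ →
      ∃ q : TPath Tr₂, q.states 0 = i₂ ∧ StutterEquiv L₁ L₂ p q) ∧
  (∀ q : TPath Tr₂, q.states 0 = i₂ →
      ∃ p : TPath Tr₁, p.states 0 = i₁ ∧ StutterEquiv L₁ L₂ p q)

/-- Weak-trace equivalence of two systems with the same set `I` of invisible actions. -/
def WeakTraceEquiv {S₁ S₂ A : Type*} (Tr₁ : S₁ → A → S₁ → Prop) (i₁ : S₁)
    (Tr₂ : S₂ → A → S₂ → Prop) (i₂ : S₂) (I : Set A) : Prop :=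
  (∀ p : TPath Tr₁, p.states 0 = i₁ → ∃ q : TPath Tr₂, q.states 0 = i₂ ∧ WeakEquiv I p q) ∧
  (∀ q : TPath Tr₂, q.states 0 = i₂ → ∃ p : TPath Tr₁, p.states 0 = i₁ ∧ WeakEquiv I p q)

/-- An LSTS is labelled consistently iff any two weakly equivalent paths starting in a
common state are stutter equivalent. -/
def LabelledConsistently {S A l : Type*} (Tr : S → A → S → Prop) (L : S → Set l)
    (I : Set A) : Prop :=
  ∀ p q : TPath Tr, p.states 0 = q.states 0 → WeakEquiv I p q → StutterEquiv L L p q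

/-- Label sequence of an explicitly given finite run with `n` transitions. -/
noncomputable def finLabelSeq {S l : Type*} (L : S → Set l) (n : ℕ) (σ : ℕ → S) :
    ℕ → Option (Set l) :=
  fun i => if i ≤ n then some (L (σ i)) else none

/-- Stutter equivalence of two explicitly given finite runs (with `n`, resp. `m`,
transitions); both are finite, so it only requires equality of no-stutter traces. -/
def FinStutterEquiv {S l : Type*} (L : S → Set l) (n : ℕ) (σ : ℕ → S) (m : ℕ)
    (τ : ℕ → S) : Prop :=
  nsTrace (finLabelSeq L n σ) = nsTrace (finLabelSeq L m τ)

/-- Stutter equivalence of two explicitly given infinite runs; both are infinite, so it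
only requires equality of no-stutter traces. -/
def InfStutterEquiv {S l : Type*} (L : S → Set l) (σ τ : ℕ → S) : Prop :=
  nsTrace (fun i => some (L (σ i))) = nsTrace (fun i => some (L (τ i)))

section

variable {S A : Type*} {Tr : S → A → S → Prop} {r : S → Set A} {s : S} {a : A}

/-- The set `enabled(s)` of actions labelling some transition out of `s`. Membership in it unfolds
to the formula `∃ t, Tr s a t` used in the conditions above. -/
def enabledActions (Tr : S → A → S → Prop) (s : S) : Set A :=
  {a | ∃ t, Tr s a t}

theorem KeyAction.mem_enabledActions (ha : KeyAction Tr r s a) : a ∈ enabledActions Tr s :=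
  ha 0 (fun _ => s) (fun _ => a) rfl (fun _ hi => absurd hi (Nat.not_lt_zero _))
    (fun _ hi => absurd hi (Nat.not_lt_zero _))

theorem FinRun.eq_zero_of_enabledActions_subset {R : Set A} {n : ℕ} {σ : ℕ → S} {α : ℕ → A}
    (hrun : FinRun Tr n σ α) (hR : enabledActions Tr (σ 0) ⊆ R) (hα : ∀ i < n, α i ∉ R) :
    n = 0 := by
  by_contra hn
  have hpos : 0 < n := Nat.pos_of_ne_zero hn
  exact hα 0 hpos (hR ⟨σ 1, hrun 0 hpos⟩)

theorem CondD2w.condD0 (h : CondD2w Tr r s) : CondD0 Tr r s := by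
  intro hen
  obtain ⟨a, har, hkey⟩ := h hen
  exact ⟨a, har, hkey.mem_enabledActions⟩

theorem CondD2.of_enabledActions_subset (h : enabledActions Tr s ⊆ r s) : CondD2 Tr r s := by
  rintro a - ha n σ α rfl hrun hα
  obtain rfl := hrun.eq_zero_of_enabledActions_subset h hα
  exact ha

theorem CondD2w.condD2_of_subsingleton (h : CondD2w Tr r s)
    (hsub : (r s ∩ enabledActions Tr s).Subsingleton) : CondD2 Tr r s := by
  intro a har ha
  obtain ⟨b, hbr, hkey⟩ := h ⟨a, ha⟩
  obtain rfl : a = b := hsub ⟨har, ha⟩ ⟨hbr, hkey.mem_enabledActions⟩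
  exact hkey

end

/-- Conditions D2w and C4 together imply conditions D0 and D2: if a
reduction function `r` on an LSTS satisfies D2w and C4 at a state `s`, then it satisfies
D0 and D2 at `s`. -/
theorem D2w_C4_implies_D0_D2 {S A : Type*} (Tr : S → A → S → Prop) (r : S → Set A)
    (s : S) (hD2w : CondD2w Tr r s) (hC4 : CondC4 Tr r s) :
    CondD0 Tr r s ∧ CondD2 Tr r s := by
  refine ⟨hD2w.condD0, ?_⟩
  rcases hC4 with huniv | huniq
  · exact .of_enabledActions_subset (huniv ▸ Set.subset_univ _)
  · exact hD2w.condD2_of_subsingleton fun _ ha _ hb => huniq.unique ha hb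
end

section
/- Let TS be a deterministic LSTS and r a reduction function satisfying D1, D2w, V, I, L and C4 at every state, and suppose the reduced LSTS TS_r has finitely many states. Then TS_r is stutter-trace equivalent to TS. (Hence CTL_{-X} model checking of deterministic systems with stubborn sets and condition C4 does not suffer from the inconsistent labelling problem.) -/
open scoped Classical

/-!
A path `p` of the full LSTS is simulated by executing one transition of the reduced LSTS at a time.
If the first action of `p` is not in the stubborn set, then C4 leaves a single enabled stubborn
action, which V and I force to be an invisible key action `a`. By C4, the first stubborn action of
`p`, if there is one, is `a`: with D1 and determinism it moves to the front of `p`. If there is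
none, D1 and determinism let `a` be executed before all of `p`. As `a` is invisible, the remaining
path has the same no-stutter trace in both cases.

Condition L and finiteness guarantee progress: a visible action of `p` that changes the label cannot
be postponed forever, so every label of the no-stutter trace is eventually produced. Once no label
changes remain, the simulation ends if the path is finite and continues if it is infinite.
-/

section Sequences

variable {α : Type*}

theorem subseq_count (g : ℕ → Option α) (P : ℕ → Prop) {i : ℕ} (hi : P i) :
    subseq g P (Nat.count P i) = g i := by
  have hbound : {i | P i}.Infinite ∨ Nat.count P i < {i | P i}.ncard := by
    refine or_iff_not_imp_left.2 fun hfin => ?_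
    rw [Set.not_infinite] at hfin
    rw [Set.ncard_eq_toFinset_card _ hfin]
    exact Nat.count_lt_card hfin hi
  rw [subseq, if_pos hbound, Nat.nth_count hi]

theorem subseq_eq_none (g : ℕ → Option α) (P : ℕ → Prop) {k : ℕ}
    (h : ∀ i, P i → Nat.count P i ≠ k) : subseq g P k = none := by
  refine if_neg fun hbound => ?_
  have hk : ∀ hfin : {i | P i}.Finite, k < hfin.toFinset.card := fun hfin => by
    rw [← Set.ncard_eq_toFinset_card _ hfin]
    exact hbound.resolve_left hfin.not_infinite
  exact h (Nat.nth P k) (Nat.nth_mem k hk) (Nat.count_nth hk)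

theorem subseq_tail (g : ℕ → Option α) (P : ℕ → Prop) (k : ℕ) :
    subseq (fun i => g (i + 1)) (fun i => P (i + 1)) k =
      subseq g P (k + if P 0 then 1 else 0) := by
  by_cases hk : ∃ i, P (i + 1) ∧ Nat.count (fun i => P (i + 1)) i = k
  · obtain ⟨i, hi, rfl⟩ := hk
    rw [subseq_count (fun i => g (i + 1)) (fun i => P (i + 1)) hi, ← subseq_count g P hi,
      Nat.count_succ']
  · push Not at hk
    rw [subseq_eq_none _ _ hk, subseq_eq_none]
    rintro (_ | i) hi
    · simp [hi]
    · rw [Nat.count_succ']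
      exact fun h => hk i hi (Nat.add_right_cancel h)

theorem nsTrace_zero {g : ℕ → Option α} (h0 : g 0 ≠ none) : nsTrace g 0 = g 0 := by
  have h := subseq_count g (fun i => (g i).isSome ∧ (i = 0 ∨ g i ≠ g (i - 1)))
    (i := 0) ⟨Option.isSome_iff_ne_none.2 h0, Or.inl rfl⟩
  rwa [Nat.count_zero] at h

theorem nsTrace_succ_eq_subseq {g : ℕ → Option α} (h0 : g 0 ≠ none) (k : ℕ) :
    nsTrace g (k + 1) =
      subseq (fun i => g (i + 1)) (fun i => (g (i + 1)).isSome ∧ g (i + 1) ≠ g i) k := by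
  have h := subseq_tail g (fun i => (g i).isSome ∧ (i = 0 ∨ g i ≠ g (i - 1))) k
  rw [if_pos ⟨Option.isSome_iff_ne_none.2 h0, Or.inl rfl⟩] at h
  rw [nsTrace, ← h]
  simp only [Nat.add_eq_zero_iff, one_ne_zero, and_false, false_or, Nat.add_sub_cancel]

theorem nsTrace_succ {g : ℕ → Option α} (h0 : g 0 ≠ none) (h1 : g 0 ≠ g 1) (k : ℕ) :
    nsTrace g (k + 1) = nsTrace (fun i => g (i + 1)) k := by
  rw [nsTrace_succ_eq_subseq h0, nsTrace]
  congr 1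
  funext i
  cases i <;> simp [h1.symm]

theorem nsTrace_tail_of_none {g : ℕ → Option α} (h0 : g 0 = none) :
    nsTrace (fun i => g (i + 1)) = nsTrace g := by
  funext k
  have h := subseq_tail g (fun i => (g i).isSome ∧ (i = 0 ∨ g i ≠ g (i - 1))) k
  rw [if_neg (by simp [h0]), add_zero] at h
  rw [nsTrace, nsTrace, ← h]
  congr 1
  funext i
  cases i <;> simp +contextual [h0, Option.isSome_iff_ne_none]

theorem nsTrace_tail_of_eq {g : ℕ → Option α} (h : g 0 = g 1) :
    nsTrace (fun i => g (i + 1)) = nsTrace g := by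
  by_cases h0 : g 0 = none
  · exact nsTrace_tail_of_none h0
  have h1 : g 1 ≠ none := h ▸ h0
  funext k
  rcases k with _ | k
  · rw [nsTrace_zero h1, nsTrace_zero h0, h]
  · have htail := subseq_tail (fun i => g (i + 1))
      (fun i => (g (i + 1)).isSome ∧ g (i + 1) ≠ g i) k
    rw [if_neg (by simp [h]), add_zero] at htail
    rw [nsTrace_succ_eq_subseq h1, nsTrace_succ_eq_subseq h0, htail]

theorem nsTrace_eq_nsTrace_drop {g : ℕ → Option α} {n : ℕ}
    (h : ∀ i < n, g i = g (i + 1)) : nsTrace g = nsTrace fun i => g (i + n) := by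
  induction n with
  | zero => rfl
  | succ n ih =>
    rw [ih fun i hi => h i (by omega),
      ← nsTrace_tail_of_eq (g := fun i => g (i + n)) (by simpa [add_comm] using h n n.lt_succ_self)]
    simp only [add_assoc, add_comm 1 n]

theorem nsTrace_eq_below_of_tail {g h : ℕ → Option α} (h0 : g 0 = h 0) (h1 : g 1 = h 1) {k : ℕ}
    (htail : ∀ i < k, nsTrace (fun i => g (i + 1)) i = nsTrace (fun i => h (i + 1)) i) :
    ∀ i < k, nsTrace g i = nsTrace h i := by
  intro i hi
  by_cases hnone : g 0 = none
  · rw [← nsTrace_tail_of_none (g := g) hnone, ← nsTrace_tail_of_none (g := h) (h0 ▸ hnone),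
      htail i hi]
  by_cases hstutter : g 0 = g 1
  · rw [← nsTrace_tail_of_eq (g := g) hstutter,
      ← nsTrace_tail_of_eq (g := h) (h0 ▸ h1 ▸ hstutter), htail i hi]
  rcases i with _ | i
  · rw [nsTrace_zero hnone, nsTrace_zero (h0 ▸ hnone), h0]
  · rw [nsTrace_succ hnone hstutter, nsTrace_succ (h0 ▸ hnone) (h0 ▸ h1 ▸ hstutter),
      htail i (Nat.lt_of_succ_lt hi)]

theorem nsTrace_eq_below_succ_of_tail {g h : ℕ → Option α} (h0 : g 0 = h 0) (h1 : g 1 = h 1)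
    (hsome : g 0 ≠ none) (hne : g 0 ≠ g 1) {k : ℕ}
    (htail : ∀ i < k, nsTrace (fun i => g (i + 1)) i = nsTrace (fun i => h (i + 1)) i) :
    ∀ i < k + 1, nsTrace g i = nsTrace h i := by
  rintro (_ | i) hi
  · rw [nsTrace_zero hsome, nsTrace_zero (h0 ▸ hsome), h0]
  · rw [nsTrace_succ hsome hne, nsTrace_succ (h0 ▸ hsome) (h0 ▸ h1 ▸ hne),
      htail i (Nat.lt_of_succ_lt_succ hi)]

theorem nsTrace_eq_of_removed_duplicate {g h : ℕ → Option α} (n : ℕ)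
    (hle : ∀ i ≤ n, h i = g i) (hge : ∀ i ≥ n, h i = g (i + 1)) : nsTrace h = nsTrace g := by
  induction n generalizing g h with
  | zero =>
    rw [← nsTrace_tail_of_eq ((hle 0 le_rfl).symm.trans (hge 0 le_rfl))]
    exact congrArg nsTrace (funext fun i => hge i i.zero_le)
  | succ n ih =>
    have htail : nsTrace (fun i => h (i + 1)) = nsTrace (fun i => g (i + 1)) :=
      ih (fun i hi => hle _ (by omega)) (fun i hi => hge _ (by omega))
    funext k
    exact nsTrace_eq_below_of_tail (hle 0 (by omega)) (hle 1 (by omega))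
      (fun i _ => congrFun htail i) k (Nat.lt_succ_self k)

end Sequences

/-- Each action leads from a given state to at most one state. -/
def IsDeterministic {S A : Type*} (Tr : S → A → S → Prop) : Prop :=
  ∀ s a t t', Tr s a t → Tr s a t' → t = t'

/-- The form of condition L that makes sense for an infinite reduced LSTS: no infinite path of it
avoids a visible action `b` in all its stubborn sets. It is phrased as well-foundedness so that it
can be used for induction. -/
def FairToVisible {S A : Type*} (Tr : S → A → S → Prop) (I : Set A) (r : S → Set A) (s0 : S) :
    Prop :=
  ∀ b ∉ I, WellFounded fun t s => b ∉ r s ∧ ∃ a, RedTr Tr r s0 s a t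

/-- The conditions on single states that make a reduced transition simulate a full path (`L`, which
speaks about cycles, is not one of them), imposed on the states of the reduced LSTS only. -/
def StubbornOnReach {S A : Type*} (Tr : S → A → S → Prop) (I : Set A) (r : S → Set A) (s0 : S) :
    Prop :=
  ∀ s, RedReach Tr r s0 s → CondD1 Tr r s ∧ CondV Tr I r s ∧ CondI Tr I r s ∧ CondC4 Tr r s

namespace TPath

variable {S A l : Type*} {Tr : S → A → S → Prop}

/-- The path without its first transition (a path of length `0` keeps that length). -/
def tail (p : TPath Tr) : TPath Tr where
  states i := p.states (i + 1)
  acts i := p.acts (i + 1)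
  len := p.len - 1
  valid i hi := p.valid (i + 1) (by exact_mod_cast lt_tsub_iff_right.1 hi)

/-- The path `s -a→ p`. -/
def cons (s : S) (a : A) (p : TPath Tr) (h : Tr s a (p.states 0)) : TPath Tr where
  states i := i.casesOn s p.states
  acts i := i.casesOn a p.acts
  len := p.len + 1
  valid
    | 0, _ => h
    | i + 1, hi => p.valid i (by
        push_cast at hi
        exact (ENat.add_lt_add_iff_right ENat.one_ne_top).1 hi)

/-- The `j`-th transition of the path changes the state label. -/
def ChangesAt (L : S → Set l) (p : TPath Tr) (j : ℕ) : Prop :=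
  (j : ℕ∞) < p.len ∧ L (p.states j) ≠ L (p.states (j + 1))

theorem labelSeq_of_le (L : S → Set l) (p : TPath Tr) {i : ℕ} (hi : (i : ℕ∞) ≤ p.len) :
    p.labelSeq L i = some (L (p.states i)) :=
  if_pos hi

theorem labelSeq_zero (L : S → Set l) (p : TPath Tr) :
    p.labelSeq L 0 = some (L (p.states 0)) :=
  p.labelSeq_of_le L (by simp)

theorem labelSeq_of_len_eq_top (L : S → Set l) (p : TPath Tr) (hlen : p.len = ⊤) :
    p.labelSeq L = fun i => some (L (p.states i)) :=
  funext fun _ => p.labelSeq_of_le L (hlen ▸ le_top)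

theorem natCast_le_len_sub_one_iff (p : TPath Tr) (hlen : p.len ≠ 0) (i : ℕ) :
    (i : ℕ∞) ≤ p.len - 1 ↔ ((i + 1 : ℕ) : ℕ∞) ≤ p.len := by
  rw [Nat.cast_add, Nat.cast_one]
  exact (ENat.addLECancellable_of_ne_top ENat.one_ne_top).le_tsub_iff_right
    (Order.one_le_iff_ne_zero.2 hlen)

theorem labelSeq_tail (L : S → Set l) (p : TPath Tr) (hlen : p.len ≠ 0) :
    p.tail.labelSeq L = fun i => p.labelSeq L (i + 1) := by
  funext i
  simp only [labelSeq, tail, p.natCast_le_len_sub_one_iff hlen]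

theorem labelSeq_cons (L : S → Set l) {s : S} {a : A} (p : TPath Tr) (h : Tr s a (p.states 0)) :
    (fun i => (cons s a p h).labelSeq L (i + 1)) = p.labelSeq L := by
  funext i
  simp only [labelSeq, cons, Nat.cast_add, Nat.cast_one,
    ENat.add_le_add_iff_right ENat.one_ne_top]

theorem label_eq_of_not_changesAt {L : S → Set l} {p : TPath Tr}
    (h : ∀ j, ¬ p.ChangesAt L j) {i : ℕ} (hi : (i : ℕ∞) ≤ p.len) :
    L (p.states i) = L (p.states 0) := by
  induction i with
  | zero => rfl
  | succ i ih =>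
    have hlt : (i : ℕ∞) < p.len := lt_of_lt_of_le (by exact_mod_cast i.lt_succ_self) hi
    rw [← ih hlt.le]
    by_contra hne
    exact h i ⟨hlt, Ne.symm hne⟩

theorem ChangesAt.visible {L : S → Set l} {I : Set A} (hI : InvisibleSet Tr L I) {p : TPath Tr}
    {j : ℕ} (h : p.ChangesAt L j) : p.acts j ∉ I :=
  fun hj => h.2 (hI _ hj _ _ (p.valid j h.1))

end TPath

section Commutation

variable {S A : Type*} {Tr : S → A → S → Prop} {I : Set A} {r : S → Set A} {s : S} {a b : A}

theorem KeyAction.enabled (h : KeyAction Tr r s a) : ∃ t, Tr s a t :=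
  h 0 (fun _ => s) (fun _ => a) rfl (fun _ hi => absurd hi (Nat.not_lt_zero _))
    (fun _ hi => absurd hi (Nat.not_lt_zero _))

theorem exists_unique_enabled_invisible_key (hV : CondV Tr I r s) (hCI : CondI Tr I r s)
    (hC4 : CondC4 Tr r s) (hb : b ∉ r s) (hben : ∃ t, Tr s b t) :
    ∃ a ∈ r s, a ∈ I ∧ KeyAction Tr r s a ∧ ∀ c ∈ r s, (∃ t, Tr s c t) → c = a := by
  obtain huniv | ⟨a, ⟨har, haen⟩, hunique⟩ := hC4
  · exact absurd (huniv ▸ Set.mem_univ b) hb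
  have haI : ∃ c ∈ I, ∃ t, Tr s c t := by
    by_cases hbI : b ∈ I
    · exact ⟨b, hbI, hben⟩
    · exact ⟨a, by_contra fun haI => hb (hV ⟨a, har, haI, haen⟩ b hbI), haen⟩
  obtain ⟨c, hcr, hcI, hckey⟩ := hCI haI
  obtain rfl : c = a := hunique c ⟨hcr, hckey.enabled⟩
  exact ⟨c, hcr, hcI, hckey, fun d hd hden => hunique d ⟨hd, hden⟩⟩

theorem FinRun.eq_of_deterministic (hdet : IsDeterministic Tr) {n : ℕ} {σ τ : ℕ → S}
    {α : ℕ → A} (hσ : FinRun Tr n σ α) (hτ : FinRun Tr n τ α) (h0 : σ 0 = τ 0) :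
    ∀ i ≤ n, σ i = τ i := by
  intro i hi
  induction i with
  | zero => exact h0
  | succ i ih => exact hdet _ _ _ _ (hσ i hi) (ih (by omega) ▸ hτ i hi)

theorem FinRun.successors (hdet : IsDeterministic Tr) (hD1 : CondD1 Tr r s) (ha : a ∈ r s)
    {n : ℕ} {σ τ : ℕ → S} {α : ℕ → A} (h0 : σ 0 = s) (hσ : FinRun Tr n σ α)
    (havoid : ∀ i < n, α i ∉ r s) (hτ : ∀ i ≤ n, Tr (σ i) a (τ i)) : FinRun Tr n τ α := by
  induction n with
  | zero => exact fun _ hi => absurd hi (Nat.not_lt_zero _)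
  | succ n ih =>
    have hrun : FinRun Tr n τ α := ih (fun i hi => hσ i (by omega))
      (fun i hi => havoid i (by omega)) (fun i hi => hτ i (by omega))
    obtain ⟨τ', hstart, hrun', hend⟩ :=
      hD1 a ha (n + 1) σ α _ h0 hσ havoid (hτ (n + 1) le_rfl)
    have heq : τ' n = τ n := eq_of_deterministic hdet (fun i hi => hrun' i (by omega)) hrun
      (hdet _ _ _ _ hstart (h0 ▸ hτ 0 (by omega))) n le_rfl
    intro i hi
    rcases Nat.lt_succ_iff_lt_or_eq.1 hi with hi | rfl
    · exact hrun i hi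
    · exact heq ▸ hend ▸ hrun' i (Nat.lt_succ_self i)

theorem TPath.exists_successors (hdet : IsDeterministic Tr) (p : TPath Tr)
    (hD1 : CondD1 Tr r (p.states 0)) (ha : a ∈ r (p.states 0))
    (hkey : KeyAction Tr r (p.states 0) a) {N : ℕ∞} (hN : N ≤ p.len)
    (havoid : ∀ i : ℕ, (i : ℕ∞) < N → p.acts i ∉ r (p.states 0)) :
    ∃ τ : ℕ → S, (∀ i : ℕ, (i : ℕ∞) ≤ N → Tr (p.states i) a (τ i)) ∧
      ∀ i : ℕ, (i : ℕ∞) < N → Tr (τ i) (p.acts i) (τ (i + 1)) := by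
  have hlt : ∀ {n i : ℕ}, (n : ℕ∞) ≤ N → i < n → (i : ℕ∞) < N := fun hn hi =>
    lt_of_lt_of_le (by exact_mod_cast hi) hn
  have hrun : ∀ n : ℕ, (n : ℕ∞) ≤ N → FinRun Tr n p.states p.acts :=
    fun n hn i hi => p.valid i ((hlt hn hi).trans_le hN)
  have hsucc : ∀ n : ℕ, ∃ t, (n : ℕ∞) ≤ N → Tr (p.states n) a t := fun n => by
    by_cases hn : (n : ℕ∞) ≤ N
    · obtain ⟨t, ht⟩ := hkey n p.states p.acts rfl (hrun n hn) fun i hi => havoid i (hlt hn hi)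
      exact ⟨t, fun _ => ht⟩
    · exact ⟨p.states 0, fun h => absurd h hn⟩
  choose τ hτ using hsucc
  refine ⟨τ, hτ, fun i hi => ?_⟩
  have hi' : ((i + 1 : ℕ) : ℕ∞) ≤ N := by exact_mod_cast Order.add_one_le_of_lt hi
  exact FinRun.successors hdet hD1 ha rfl (hrun _ hi') (fun j hj => havoid j (hlt hi' hj))
    (fun j hj => hτ j (le_trans (by exact_mod_cast hj) hi')) i (Nat.lt_succ_self i)

end Commutation

namespace TPath

variable {S A l : Type*} {Tr : S → A → S → Prop} {p p' : TPath Tr} {L : S → Set l} {I : Set A}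
  {r : S → Set A} {a : A}

/-- `p'` is what remains to be simulated of `p` after one transition `s -a→ p'.states 0` of the
reduced LSTS, where `s` is the first state of `p`: either `a` is the first action of `p`
(`head`), or it is the invisible `n`-th action of `p` moved to the front (`commute`), or it is an
invisible action that can be prepended to `p` as a whole (`postpone`). -/
inductive Residual (L : S → Set l) (r : S → Set A) (p p' : TPath Tr) : Prop
  | head (eq_tail : p' = p.tail)
  | commute (n : ℕ) (pos : 0 < n) (lt_len : (n : ℕ∞) < p.len) (len_eq : p'.len = p.len - 1)
      (avoid : ∀ i < n, p.acts i ∉ r (p.states 0))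
      (acts_eq : ∀ i < n, p'.acts i = p.acts i)
      (label_eq : ∀ i ≤ n, L (p'.states i) = L (p.states i))
      (states_eq : ∀ i ≥ n, p'.states i = p.states (i + 1))
  | postpone (len_eq : p'.len = p.len)
      (avoid : ∀ i : ℕ, (i : ℕ∞) < p.len → p.acts i ∉ r (p.states 0))
      (acts_eq : p'.acts = p.acts)
      (label_eq : ∀ i : ℕ, (i : ℕ∞) ≤ p.len → L (p'.states i) = L (p.states i))

theorem exists_postponed (hI : InvisibleSet Tr L I) (hdet : IsDeterministic Tr) (p : TPath Tr)
    (hD1 : CondD1 Tr r (p.states 0)) (ha : a ∈ r (p.states 0)) (haI : a ∈ I)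
    (hkey : KeyAction Tr r (p.states 0) a)
    (havoid : ∀ i : ℕ, (i : ℕ∞) < p.len → p.acts i ∉ r (p.states 0)) :
    ∃ p' : TPath Tr, Tr (p.states 0) a (p'.states 0) ∧ Residual L r p p' := by
  obtain ⟨τ, hτ, hrun⟩ := p.exists_successors hdet hD1 ha hkey le_rfl havoid
  exact ⟨⟨τ, p.acts, p.len, hrun⟩, hτ 0 (by simp),
    .postpone rfl havoid rfl fun i hi => (hI a haI _ _ (hτ i hi)).symm⟩

theorem exists_commuted (hI : InvisibleSet Tr L I) (hdet : IsDeterministic Tr) (p : TPath Tr)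
    (hD1 : CondD1 Tr r (p.states 0)) {n : ℕ} (hpos : 0 < n) (hn : (n : ℕ∞) < p.len)
    (ha : p.acts n ∈ r (p.states 0)) (haI : p.acts n ∈ I)
    (hkey : KeyAction Tr r (p.states 0) (p.acts n))
    (havoid : ∀ i < n, p.acts i ∉ r (p.states 0)) :
    ∃ p' : TPath Tr, Tr (p.states 0) (p.acts n) (p'.states 0) ∧ Residual L r p p' := by
  obtain ⟨τ, hτ, hrun⟩ := p.exists_successors hdet hD1 ha hkey hn.le
    fun i hi => havoid i (by exact_mod_cast hi)
  have hjoin : τ n = p.states (n + 1) := hdet _ _ _ _ (hτ n le_rfl) (p.valid n hn)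
  have hvalid : ∀ i : ℕ, (i : ℕ∞) < p.len - 1 →
      Tr (if i ≤ n then τ i else p.states (i + 1))
        (if i < n then p.acts i else p.acts (i + 1))
        (if i + 1 ≤ n then τ (i + 1) else p.states (i + 1 + 1)) := by
    intro i hi
    have htail := p.tail.valid i hi
    rcases lt_trichotomy i n with h | rfl | h
    · rw [if_pos h.le, if_pos h, if_pos (by omega)]
      exact hrun i (by exact_mod_cast h)
    · rw [if_pos le_rfl, if_neg (by omega), if_neg (by omega), hjoin]
      exact htail
    · rw [if_neg (by omega), if_neg (by omega), if_neg (by omega)]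
      exact htail
  refine ⟨⟨fun i => if i ≤ n then τ i else p.states (i + 1),
    fun i => if i < n then p.acts i else p.acts (i + 1), p.len - 1, hvalid⟩,
    by simpa using hτ 0 (by simp),
    .commute n hpos hn rfl havoid (fun i hi => if_pos hi) (fun i hi => ?_) fun i hi => ?_⟩
  · simpa only [if_pos hi] using (hI _ haI _ _ (hτ i (by exact_mod_cast hi))).symm
  · rcases hi.eq_or_lt with rfl | hi
    · simpa only [if_pos le_rfl] using hjoin
    · exact if_neg hi.not_ge

theorem exists_residual (hI : InvisibleSet Tr L I) (hdet : IsDeterministic Tr) (p : TPath Tr)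
    (hD1 : CondD1 Tr r (p.states 0)) (hV : CondV Tr I r (p.states 0))
    (hCI : CondI Tr I r (p.states 0)) (hC4 : CondC4 Tr r (p.states 0)) (hlen : p.len ≠ 0) :
    ∃ a ∈ r (p.states 0), ∃ p' : TPath Tr,
      Tr (p.states 0) a (p'.states 0) ∧ Residual L r p p' := by
  have hen : Tr (p.states 0) (p.acts 0) (p.states 1) :=
    p.valid 0 (by simpa using pos_iff_ne_zero.2 hlen)
  by_cases hfirst : p.acts 0 ∈ r (p.states 0)
  · exact ⟨p.acts 0, hfirst, p.tail, hen, .head rfl⟩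
  obtain ⟨a, ha, haI, hkey, hunique⟩ :=
    exists_unique_enabled_invisible_key hV hCI hC4 hfirst ⟨_, hen⟩
  by_cases hex : ∃ n : ℕ, (n : ℕ∞) < p.len ∧ p.acts n ∈ r (p.states 0)
  · let n := Nat.find hex
    obtain ⟨hn, hnr⟩ : (n : ℕ∞) < p.len ∧ p.acts n ∈ r (p.states 0) := Nat.find_spec hex
    have hlt : ∀ {i}, i < n → (i : ℕ∞) < p.len := fun hi => lt_trans (by exact_mod_cast hi) hn
    have havoid : ∀ i < n, p.acts i ∉ r (p.states 0) :=
      fun i hi hir => Nat.find_min hex hi ⟨hlt hi, hir⟩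
    obtain ⟨σ, hσ, -⟩ := hD1 _ hnr n p.states p.acts _ rfl (fun i hi => p.valid i (hlt hi))
      havoid (p.valid n hn)
    obtain rfl : p.acts n = a := hunique _ hnr ⟨_, hσ⟩
    have hpos : 0 < n := Nat.pos_of_ne_zero fun h0 => hfirst (h0 ▸ hnr)
    exact ⟨_, hnr, exists_commuted hI hdet p hD1 hpos hn hnr haI hkey havoid⟩
  · push Not at hex
    exact ⟨a, ha, exists_postponed hI hdet p hD1 ha haI hkey hex⟩

namespace Residual

theorem len_le (h : Residual L r p p') : p'.len ≤ p.len := by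
  cases h with
  | head eq_tail => exact eq_tail ▸ tsub_le_self
  | commute n _ _ len_eq => exact len_eq ▸ tsub_le_self
  | postpone len_eq => exact len_eq.le

theorem len_eq_top_iff (h : Residual L r p p') : p'.len = ⊤ ↔ p.len = ⊤ := by
  have tsub_one : p.len - 1 = ⊤ ↔ p.len = ⊤ := by simp
  cases h with
  | head eq_tail => exact eq_tail ▸ tsub_one
  | commute n _ _ len_eq => exact len_eq ▸ tsub_one
  | postpone len_eq => rw [len_eq]

theorem label_eq_const (h : Residual L r p p') (hp : p.len = ⊤) {c : Set l}
    (hc : ∀ i, L (p.states i) = c) : ∀ i, L (p'.states i) = c := by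
  intro i
  cases h with
  | head eq_tail => exact eq_tail ▸ hc (i + 1)
  | commute n _ _ _ _ _ label_eq states_eq =>
    rcases le_total i n with hi | hi
    · rw [label_eq i hi, hc]
    · rw [states_eq i hi, hc]
  | postpone _ _ _ label_eq => rw [label_eq i (by simp [hp]), hc]

theorem nsTrace_labelSeq_eq (h : Residual L r p p') (hp' : p' ≠ p.tail) :
    nsTrace (p'.labelSeq L) = nsTrace (p.labelSeq L) ∧ L (p'.states 0) = L (p.states 0) := by
  cases h with
  | head eq_tail => exact absurd eq_tail hp'
  | commute n pos lt_len len_eq _ _ label_eq states_eq =>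
    refine ⟨nsTrace_eq_of_removed_duplicate n (fun i hi => ?_) fun i hi => ?_, label_eq 0 n.zero_le⟩
    · have hi' : ((i + 1 : ℕ) : ℕ∞) ≤ p.len :=
        le_trans (by exact_mod_cast Nat.succ_le_succ hi) (Order.add_one_le_of_lt lt_len)
      have hi'' : (i : ℕ∞) ≤ p'.len :=
        len_eq ▸ (p.natCast_le_len_sub_one_iff (ne_bot_of_gt lt_len) i).2 hi'
      rw [labelSeq_of_le L p' hi'', label_eq i hi,
        labelSeq_of_le L p (le_trans (by exact_mod_cast i.le_succ) hi')]
    · simp only [labelSeq, len_eq, p.natCast_le_len_sub_one_iff (ne_bot_of_gt lt_len),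
        states_eq i hi]
  | postpone len_eq _ _ label_eq =>
    refine ⟨congrArg nsTrace (funext fun i => ?_), label_eq 0 (by simp)⟩
    simp only [labelSeq, len_eq]
    split_ifs with hi
    · rw [label_eq i hi]
    · rfl

theorem nsTrace_eq_below (h : Residual L r p p') (hlen : p.len ≠ 0) {g : ℕ → Option (Set l)}
    (h0 : g 0 = some (L (p.states 0))) (h1 : g 1 = some (L (p'.states 0))) {k : ℕ}
    (htail : ∀ i < k, nsTrace (fun i => g (i + 1)) i = nsTrace (p'.labelSeq L) i) :
    ∀ i < k, nsTrace g i = nsTrace (p.labelSeq L) i := by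
  by_cases hp' : p' = p.tail
  · subst hp'
    rw [labelSeq_tail L p hlen] at htail
    refine nsTrace_eq_below_of_tail (h0.trans (p.labelSeq_zero L).symm) ?_ htail
    rw [h1, ← labelSeq_zero, labelSeq_tail L p hlen]
  · obtain ⟨htrace, hlabel⟩ := h.nsTrace_labelSeq_eq hp'
    rwa [nsTrace_tail_of_eq (h0.trans (hlabel ▸ h1.symm)), htrace] at htail

theorem changesAt_cases (h : Residual L r p p') {j : ℕ} (hj : p.ChangesAt L j) :
    (p' = p.tail ∧ L (p.states 0) ≠ L (p.states 1)) ∨ (∃ i < j, p'.ChangesAt L i) ∨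
      (p.acts j ∉ r (p.states 0) ∧ p'.acts j = p.acts j ∧ p'.ChangesAt L j) := by
  obtain ⟨hjlen, hjne⟩ := hj
  have hpred : ∀ {i : ℕ}, ((i + 1 : ℕ) : ℕ∞) < p.len → (i : ℕ∞) < p.len - 1 :=
    fun hi => lt_tsub_iff_right.2 (by exact_mod_cast hi)
  cases h with
  | head eq_tail =>
    rcases j with _ | j
    · exact .inl ⟨eq_tail, hjne⟩
    · exact .inr (.inl ⟨j, j.lt_succ_self, by subst eq_tail; exact ⟨hpred hjlen, hjne⟩⟩)
  | commute n _ lt_len len_eq avoid acts_eq label_eq states_eq =>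
    rcases lt_trichotomy j n with hjn | rfl | hjn
    · refine .inr (.inr ⟨avoid j hjn, acts_eq j hjn, ?_, ?_⟩)
      · exact len_eq ▸ hpred (lt_of_le_of_lt (by exact_mod_cast hjn) lt_len)
      · rwa [label_eq j hjn.le, label_eq (j + 1) hjn]
    · exact absurd ((label_eq j le_rfl).symm.trans (congrArg L (states_eq j le_rfl))) hjne
    · obtain ⟨i, rfl⟩ := Nat.exists_eq_add_one_of_ne_zero (Nat.ne_zero_of_lt hjn)
      refine .inr (.inl ⟨i, i.lt_succ_self, len_eq ▸ hpred hjlen, ?_⟩)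
      rwa [states_eq i (by omega), states_eq (i + 1) (by omega)]
  | postpone len_eq avoid acts_eq label_eq =>
    refine .inr (.inr ⟨avoid j hjlen, congrFun acts_eq j, len_eq ▸ hjlen, ?_⟩)
    rwa [label_eq j hjlen.le, label_eq (j + 1) (by exact_mod_cast Order.add_one_le_of_lt hjlen)]

end Residual

end TPath

section Simulation

variable {S A l : Type*} {Tr : S → A → S → Prop} {L : S → Set l} {I : Set A} {r : S → Set A}
  {s0 : S}

theorem CondL.fairToVisible (hL : CondL Tr I r s0) (hfin : {s | RedReach Tr r s0 s}.Finite) :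
    FairToVisible Tr I r s0 := by
  intro b hb
  refine wellFounded_iff_isEmpty_descending_chain.2 ⟨fun ⟨σ, hσ⟩ => ?_⟩
  choose havoid α hα using hσ
  obtain ⟨i, j, hij, heq⟩ : ∃ i j, i < j ∧ σ i = σ j := by
    obtain ⟨i, -, j, -, hne, heq⟩ := Set.infinite_univ.exists_ne_map_eq_of_mapsTo
      (fun i _ => (hα i).1 : Set.MapsTo σ Set.univ {s | RedReach Tr r s0 s}) hfin
    rcases hne.lt_or_gt with h | h
    exacts [⟨i, j, h, heq⟩, ⟨j, i, h, heq.symm⟩]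
  obtain ⟨k, -, hk⟩ := hL b hb (j - i) (fun k => σ (i + k)) (fun k => α (i + k))
    (Nat.sub_pos_of_lt hij) (fun k _ => hα (i + k)) (by simp [Nat.add_sub_cancel' hij.le, heq])
  exact havoid (i + k) hk

theorem RedTr.redReach {s t : S} {a : A} (h : RedTr Tr r s0 s a t) : RedReach Tr r s0 t :=
  .step h.1 h.2.1 h.2.2

namespace TPath

-- Until a label change reaches the front, each transition of the reduced LSTS either moves a change
-- to an earlier position or leaves its action `b` outside the stubborn set; the latter cannot go on
-- forever.
theorem residual_induction (hI : InvisibleSet Tr L I) (hfair : FairToVisible Tr I r s0)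
    {C : TPath Tr → Prop}
    (const : ∀ p : TPath Tr, RedReach Tr r s0 (p.states 0) → (∀ j, ¬ p.ChangesAt L j) → C p)
    (step : ∀ p : TPath Tr, RedReach Tr r s0 (p.states 0) → p.len ≠ 0 →
      (∀ a p', RedTr Tr r s0 (p.states 0) a (p'.states 0) → Residual L r p p' →
        (p' = p.tail ∧ L (p.states 0) ≠ L (p.states 1)) ∨ C p') → C p)
    (p : TPath Tr) (hp : RedReach Tr r s0 (p.states 0)) : C p := by
  suffices of_changesAt : ∀ (j : ℕ) (b : A), b ∉ I → ∀ (s : S) (p : TPath Tr), p.states 0 = s →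
      RedReach Tr r s0 s → p.ChangesAt L j → p.acts j = b → C p by
    by_cases hchange : ∃ j, p.ChangesAt L j
    · obtain ⟨j, hj⟩ := hchange
      exact of_changesAt j _ (hj.visible hI) _ p rfl hp hj rfl
    · exact const p hp (not_exists.1 hchange)
  intro j
  induction j using Nat.strong_induction_on with | _ j ih_index
  intro b hb s
  induction s using (hfair b hb).induction with | _ s ih_state
  rintro p rfl hp hj rfl
  refine step p hp (ne_bot_of_gt hj.1) fun a p' htr hres => ?_
  rcases hres.changesAt_cases hj with hfront | ⟨i, hi, hchange⟩ | ⟨havoid, hact, hchange⟩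
  · exact .inl hfront
  · exact .inr (ih_index i hi _ (hchange.visible hI) _ p' rfl htr.redReach hchange rfl)
  · exact .inr (ih_state _ ⟨havoid, a, htr⟩ p' rfl htr.redReach hchange hact)

theorem exists_redTr_residual (hI : InvisibleSet Tr L I) (hdet : IsDeterministic Tr)
    (hstub : StubbornOnReach Tr I r s0) (p : TPath Tr) (hp : RedReach Tr r s0 (p.states 0))
    (hlen : p.len ≠ 0) :
    ∃ a p', RedTr Tr r s0 (p.states 0) a (p'.states 0) ∧ Residual L r p p' := by
  obtain ⟨hD1, hV, hCI, hC4⟩ := hstub _ hp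
  obtain ⟨a, ha, p', htr, hres⟩ := exists_residual hI hdet p hD1 hV hCI hC4 hlen
  exact ⟨a, p', ⟨hp, ha, htr⟩, hres⟩

theorem nsTrace_labelSeq_of_not_changesAt {p : TPath Tr} (h : ∀ j, ¬ p.ChangesAt L j)
    (hlen : p.len ≠ ⊤) :
    nsTrace (p.labelSeq L) = nsTrace fun i => if i = 0 then some (L (p.states 0)) else none := by
  obtain ⟨n, hn⟩ := ENat.ne_top_iff_exists.1 hlen
  have hconst : ∀ i ≤ n, p.labelSeq L i = some (L (p.states 0)) := fun i hi => by
    have hi' : (i : ℕ∞) ≤ p.len := hn ▸ by exact_mod_cast hi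
    rw [p.labelSeq_of_le L hi', label_eq_of_not_changesAt h hi']
  rw [nsTrace_eq_nsTrace_drop fun i hi => (hconst i hi.le).trans (hconst (i + 1) hi).symm]
  congr 1
  funext i
  rcases i with _ | i
  · simpa using hconst n le_rfl
  · exact if_neg (by rw [← hn]; norm_cast; omega)

theorem Residual.exists_stutterEquiv {p p' : TPath Tr} {a : A} (hres : Residual L r p p')
    (htr : RedTr Tr r s0 (p.states 0) a (p'.states 0)) (hlen : p.len ≠ 0)
    (h : ∃ q : TPath (RedTr Tr r s0), q.states 0 = p'.states 0 ∧ StutterEquiv L L q p') :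
    ∃ q : TPath (RedTr Tr r s0), q.states 0 = p.states 0 ∧ StutterEquiv L L q p := by
  obtain ⟨q, hq0, hqlen, hq⟩ := h
  let q' : TPath (RedTr Tr r s0) := cons _ a q (hq0 ▸ htr)
  have htail : (fun i => q'.labelSeq L (i + 1)) = q.labelSeq L := labelSeq_cons L q _
  refine ⟨q', rfl, ?_, funext fun k => ?_⟩
  · rw [← hres.len_eq_top_iff, ← hqlen]
    simp [q', cons]
  · refine hres.nsTrace_eq_below hlen (labelSeq_zero L q') ?_ (fun i _ => ?_) k k.lt_succ_self
    · rw [congrFun htail 0, labelSeq_zero, hq0]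
    · rw [htail, hq]

theorem exists_stutterEquiv_of_not_changesAt {p : TPath Tr} (h : ∀ j, ¬ p.ChangesAt L j)
    (hlen : p.len ≠ ⊤) :
    ∃ q : TPath (RedTr Tr r s0), q.states 0 = p.states 0 ∧ StutterEquiv L L q p := by
  refine ⟨⟨p.states, p.acts, 0, fun i hi => absurd hi not_lt_zero⟩, rfl, by simpa, ?_⟩
  rw [nsTrace_labelSeq_of_not_changesAt h hlen]
  congr 1
  funext i
  by_cases hi : i = 0 <;> simp [labelSeq, hi]

theorem exists_stutterEquiv_of_len_ne_top (hI : InvisibleSet Tr L I) (hdet : IsDeterministic Tr)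
    (hstub : StubbornOnReach Tr I r s0) (hfair : FairToVisible Tr I r s0) (p : TPath Tr)
    (hp : RedReach Tr r s0 (p.states 0)) (hlen : p.len ≠ ⊤) :
    ∃ q : TPath (RedTr Tr r s0), q.states 0 = p.states 0 ∧ StutterEquiv L L q p := by
  obtain ⟨n, hn⟩ := ENat.ne_top_iff_exists.1 hlen
  replace hn : p.len ≤ n := hn.ge
  clear hlen
  induction n generalizing p with
  | zero =>
    have hzero : p.len = 0 := by simpa using hn
    exact exists_stutterEquiv_of_not_changesAt (by simp [ChangesAt, hzero]) (by simp [hzero])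
  | succ n ih =>
    revert hn
    refine residual_induction (C := fun p => p.len ≤ (n + 1 : ℕ) → ∃ q : TPath (RedTr Tr r s0),
      q.states 0 = p.states 0 ∧ StutterEquiv L L q p) hI hfair ?_ ?_ p hp
    · exact fun p _ hconst hn => exists_stutterEquiv_of_not_changesAt hconst
        (ne_top_of_le_ne_top (ENat.natCast_ne_top _) hn)
    · intro p hp hlen hstep hn
      obtain ⟨a, p', htr, hres⟩ := exists_redTr_residual hI hdet hstub p hp hlen
      refine hres.exists_stutterEquiv htr hlen ?_
      rcases hstep a p' htr hres with ⟨rfl, -⟩ | h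
      · exact ih p.tail htr.redReach (tsub_le_iff_right.2 (by exact_mod_cast hn))
      · exact h (hres.len_le.trans hn)

/-- `f` executes one transition of the reduced LSTS on each infinite path that starts in it. -/
def IsReducedStep (Tr : S → A → S → Prop) (L : S → Set l) (r : S → Set A) (s0 : S)
    (f : TPath Tr → TPath Tr) : Prop :=
  ∀ p : TPath Tr, RedReach Tr r s0 (p.states 0) → p.len = ⊤ →
    (∃ a, RedTr Tr r s0 (p.states 0) a ((f p).states 0)) ∧ Residual L r p (f p)

namespace IsReducedStep

variable {f : TPath Tr → TPath Tr}

theorem redReach_and_len_iterate (hf : IsReducedStep Tr L r s0 f) (p : TPath Tr)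
    (hp : RedReach Tr r s0 (p.states 0)) (hlen : p.len = ⊤) (k : ℕ) :
    RedReach Tr r s0 ((f^[k] p).states 0) ∧ (f^[k] p).len = ⊤ := by
  induction k with
  | zero => exact ⟨hp, hlen⟩
  | succ k ih =>
    obtain ⟨⟨a, htr⟩, hres⟩ := hf _ ih.1 ih.2
    rw [Function.iterate_succ_apply']
    exact ⟨htr.redReach, hres.len_eq_top_iff.2 ih.2⟩

theorem label_iterate_of_const (hf : IsReducedStep Tr L r s0 f) (p : TPath Tr)
    (hp : RedReach Tr r s0 (p.states 0)) (hlen : p.len = ⊤) {c : Set l}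
    (hc : ∀ i, L (p.states i) = c) (k : ℕ) : ∀ i, L ((f^[k] p).states i) = c := by
  induction k with
  | zero => exact hc
  | succ k ih =>
    obtain ⟨hreach, htop⟩ := hf.redReach_and_len_iterate p hp hlen k
    rw [Function.iterate_succ_apply']
    exact (hf _ hreach htop).2.label_eq_const htop ih

theorem nsTrace_iterate_eq (hI : InvisibleSet Tr L I) (hfair : FairToVisible Tr I r s0)
    (hf : IsReducedStep Tr L r s0 f) (p : TPath Tr) (hp : RedReach Tr r s0 (p.states 0))
    (hlen : p.len = ⊤) :
    nsTrace (fun k => some (L ((f^[k] p).states 0))) = nsTrace (p.labelSeq L) := by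
  suffices below : ∀ (n : ℕ) (p : TPath Tr), RedReach Tr r s0 (p.states 0) → p.len = ⊤ →
      ∀ k < n, nsTrace (fun k => some (L ((f^[k] p).states 0))) k = nsTrace (p.labelSeq L) k from
    funext fun k => below (k + 1) p hp hlen k k.lt_succ_self
  intro n
  induction n with
  | zero => exact fun _ _ _ _ hk => absurd hk (Nat.not_lt_zero _)
  | succ n ih =>
    refine residual_induction hI hfair (fun p hp hconst hlen k _ => ?_)
      (fun p hp hlen' hstep hlen => ?_)
    · have hc : ∀ i, L (p.states i) = L (p.states 0) :=
        fun i => label_eq_of_not_changesAt hconst (by simp [hlen])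
      simp only [p.labelSeq_of_len_eq_top L hlen, hf.label_iterate_of_const p hp hlen hc, hc]
    · obtain ⟨⟨a, htr⟩, hres⟩ := hf p hp hlen
      have htop : (f p).len = ⊤ := hres.len_eq_top_iff.2 hlen
      rcases hstep a (f p) htr hres with ⟨heq, hne⟩ | h
      · have htail : (fun i => p.labelSeq L (i + 1)) = (f p).labelSeq L := by
          rw [heq, labelSeq_tail L p hlen']
        refine nsTrace_eq_below_succ_of_tail (h := p.labelSeq L) (p.labelSeq_zero L).symm ?_
          (Option.some_ne_none _) ?_ (htail ▸ ih (f p) htr.redReach htop)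
        · exact ((f p).labelSeq_zero L).symm.trans (congrFun htail 0).symm
        · exact fun h => hne (by simpa [heq, tail] using h)
      · exact hres.nsTrace_eq_below hlen' rfl rfl (h htop)

end IsReducedStep

theorem exists_isReducedStep (hI : InvisibleSet Tr L I) (hdet : IsDeterministic Tr)
    (hstub : StubbornOnReach Tr I r s0) : ∃ f, IsReducedStep Tr L r s0 f := by
  have hstep : ∀ p : TPath Tr, ∃ p', RedReach Tr r s0 (p.states 0) → p.len = ⊤ →
      (∃ a, RedTr Tr r s0 (p.states 0) a (p'.states 0)) ∧ Residual L r p p' := fun p => by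
    by_cases hp : RedReach Tr r s0 (p.states 0) ∧ p.len = ⊤
    · obtain ⟨a, p', htr, hres⟩ :=
        exists_redTr_residual hI hdet hstub p hp.1 (hp.2 ▸ ENat.top_ne_zero)
      exact ⟨p', fun _ _ => ⟨⟨a, htr⟩, hres⟩⟩
    · exact ⟨p, fun hreach hlen => absurd ⟨hreach, hlen⟩ hp⟩
  exact Classical.skolem.1 hstep

theorem exists_stutterEquiv_of_len_eq_top (hI : InvisibleSet Tr L I) (hdet : IsDeterministic Tr)
    (hstub : StubbornOnReach Tr I r s0) (hfair : FairToVisible Tr I r s0) (p : TPath Tr)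
    (hp : RedReach Tr r s0 (p.states 0)) (hlen : p.len = ⊤) :
    ∃ q : TPath (RedTr Tr r s0), q.states 0 = p.states 0 ∧ StutterEquiv L L q p := by
  obtain ⟨f, hf⟩ := exists_isReducedStep hI hdet hstub
  have htr : ∀ k, ∃ a, RedTr Tr r s0 ((f^[k] p).states 0) a ((f^[k + 1] p).states 0) := fun k => by
    obtain ⟨hreach, htop⟩ := hf.redReach_and_len_iterate p hp hlen k
    rw [Function.iterate_succ_apply']
    exact (hf _ hreach htop).1
  choose α hα using htr
  refine ⟨⟨fun k => (f^[k] p).states 0, α, ⊤, fun k _ => hα k⟩, rfl, by simp [hlen], ?_⟩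
  rw [labelSeq_of_len_eq_top L _ rfl]
  exact hf.nsTrace_iterate_eq hI hfair p hp hlen

end TPath

end Simulation

theorem deterministic_stubborn_with_C4_preserves_stutter_trace_equivalence_general
    {S A l : Type*} (Tr : S → A → S → Prop) (s0 : S) (L : S → Set l) (I : Set A)
    (hI : InvisibleSet Tr L I) (r : S → Set A) (hdet : IsDeterministic Tr)
    (hstub : StubbornOnReach Tr I r s0) (hfair : FairToVisible Tr I r s0) :
    StutterTraceEquiv (RedTr Tr r s0) s0 L Tr s0 L := by
  refine ⟨fun q hq => ⟨⟨q.states, q.acts, q.len, fun i hi => (q.valid i hi).2.2⟩, hq, Iff.rfl, rfl⟩,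
    fun p hp => ?_⟩
  have hreach : RedReach Tr r s0 (p.states 0) := hp ▸ .refl
  by_cases hlen : p.len = ⊤
  · exact hp ▸ p.exists_stutterEquiv_of_len_eq_top hI hdet hstub hfair hreach hlen
  · exact hp ▸ p.exists_stutterEquiv_of_len_ne_top hI hdet hstub hfair hreach hlen

/-- Let `TS` be a deterministic LSTS and `r` a reduction function
satisfying D1, D2w, V, I, L and C4 at every state, and suppose the reduced LSTS `TS_r`
has finitely many states.  Then `TS_r` is stutter-trace equivalent to `TS`. -/
theorem deterministic_stubborn_with_C4_preserves_stutter_trace_equivalence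
    {S A l : Type*} (Tr : S → A → S → Prop) (s0 : S) (L : S → Set l) (I : Set A)
    (hI : InvisibleSet Tr L I) (r : S → Set A)
    (hdet : ∀ s a t t', Tr s a t → Tr s a t' → t = t')
    (hstub : ∀ s, CondD1 Tr r s ∧ CondD2w Tr r s ∧ CondV Tr I r s ∧ CondI Tr I r s ∧
      CondC4 Tr r s)
    (hcondL : CondL Tr I r s0)
    (hfin : {s | RedReach Tr r s0 s}.Finite) :
    StutterTraceEquiv (RedTr Tr r s0) s0 L Tr s0 L := by
  exact
    deterministic_stubborn_with_C4_preserves_stutter_trace_equivalence_general Tr s0 L I hI r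
      hdet (fun s _ => ⟨(hstub s).1, (hstub s).2.2⟩) (hcondL.fairToVisible hfin)
end

section
/- Under ordinary invisibility, the LSTS underlying a Petri net is not necessarily labelled consistently for arbitrary propositions: there exist a Petri net, a labelling L of its markings by a single atomic proposition, and two initial paths π and π' that are weakly equivalent with respect to the set of ordinarily invisible structural transitions but not stutter equivalent under L. -/
open scoped Classical

/-- A Petri net over places `P` and structural transitions `T`:
`pre p t = W(p,t)`, `post t p = W(t,p)`, and initial marking `m0`. -/
structure PetriNet (P T : Type*) where
  pre : P → T → ℕ
  post : T → P → ℕ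
  m0 : P → ℕ

/-- The firing relation of a Petri net: `m -t→ m'` iff `W(p,t) ≤ m(p)` and
`m'(p) = m(p) - W(p,t) + W(t,p)` for all places `p`. -/
def PetriNet.Fires {P T : Type*} (N : PetriNet P T) (m : P → ℕ) (t : T) (m' : P → ℕ) : Prop :=
  ∀ p, N.pre p t ≤ m p ∧ m' p = m p - N.pre p t + N.post t p

/-- Comparison operators `⋈ ∈ {<, ≤, >, ≥, =, ≠}`. -/
inductive Cmp : Type
  | lt | le | gt | ge | eq | ne

/-- Semantics of the comparison operators. -/
def Cmp.holds : Cmp → ℤ → ℤ → Prop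
  | .lt, x, y => x < y
  | .le, x, y => x ≤ y
  | .gt, x, y => x > y
  | .ge, x, y => x ≥ y
  | .eq, x, y => x = y
  | .ne, x, y => x ≠ y

/-- A linear proposition `k₁·p₁ + ⋯ + kₙ·pₙ ⋈ k`. -/
structure LinProp (P : Type*) where
  coef : P → ℤ
  cmp : Cmp
  const : ℤ

/-- The value of the linear left-hand side of a linear proposition in a marking. -/
def LinProp.value {P : Type*} [Fintype P] (q : LinProp P) (m : P → ℕ) : ℤ :=
  ∑ p, q.coef p * (m p : ℤ)

/-- Satisfaction of a linear proposition in a marking. -/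
def LinProp.sat {P : Type*} [Fintype P] (q : LinProp P) (m : P → ℕ) : Prop :=
  q.cmp.holds (q.value m) q.const

/-- A polynomial proposition `f(p₁,…,pₙ) ⋈ k`. -/
structure PolyProp (P : Type*) where
  poly : MvPolynomial P ℤ
  cmp : Cmp
  const : ℤ

/-- The value of the left-hand-side polynomial of a polynomial proposition in a marking. -/
noncomputable def PolyProp.value {P : Type*} (q : PolyProp P) (m : P → ℕ) : ℤ :=
  MvPolynomial.eval (fun p => (m p : ℤ)) q.poly

/-- Satisfaction of a polynomial proposition in a marking. -/
def PolyProp.sat {P : Type*} (q : PolyProp P) (m : P → ℕ) : Prop :=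
  q.cmp.holds (q.value m) q.const

/-!
An invisible transition preserves the current label but may change the label reached by a later
visible transition. Take a single place holding two tokens and label markings by whether it is
empty. Merging two tokens into one neither starts from nor leads to the empty place, so it is
invisible, whereas consuming a token may empty the place. Consuming at once leaves one token;
merging first and then consuming leaves none. The two paths have the same visible transitions, but
only the second one visits the empty marking, and stutter equivalent paths visit the same labels.
-/

section Subsequences

variable {α : Type*} {g : ℕ → Option α} {P : ℕ → Prop}

theorem infinite_or_lt_ncard_iff {s : Set α} {k : ℕ} :
    s.Infinite ∨ k < s.ncard ↔ ∀ hs : s.Finite, k < hs.toFinset.card := by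
  by_cases hs : s.Finite
  · simp [hs, Set.ncard_eq_toFinset_card s hs]
  · simp [hs, Set.Infinite]

theorem exists_subseq_eq_some_iff {a : α} :
    (∃ k, subseq g P k = some a) ↔ ∃ i, P i ∧ g i = some a := by
  constructor
  · rintro ⟨k, hk⟩
    obtain ⟨hlt, hg⟩ := Option.ite_none_right_eq_some.mp hk
    exact ⟨Nat.nth P k, Nat.nth_mem k (infinite_or_lt_ncard_iff.mp hlt), hg⟩
  · rintro ⟨i, hi, hg⟩
    obtain ⟨k, hlt, rfl⟩ := Nat.exists_lt_card_nth_eq hi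
    exact ⟨k, by rw [subseq, if_pos (infinite_or_lt_ncard_iff.mpr hlt), hg]⟩

theorem subseq_comp_of_strictMono {f : ℕ → ℕ} (hf : StrictMono f)
    (hP : ∀ i, P i → i ∈ Set.range f) :
    subseq (g ∘ f) (P ∘ f) = subseq g P := by
  have image_eq : f '' {i | (P ∘ f) i} = {i | P i} :=
    Set.image_preimage_eq_of_subset hP
  have in_range_iff (k : ℕ) : {i | (P ∘ f) i}.Infinite ∨ k < {i | (P ∘ f) i}.ncard ↔
      {i | P i}.Infinite ∨ k < {i | P i}.ncard := by
    rw [← image_eq, Set.infinite_image_iff hf.injective.injOn,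
      Set.ncard_image_of_injective _ hf.injective]
  funext k
  exact if_ctx_congr (in_range_iff k) (fun hk ↦ congrArg g <| Nat.nth_comp_of_strictMono hf hP <|
    infinite_or_lt_ncard_iff.mp hk) fun _ ↦ rfl

theorem exists_nsTrace_eq_some_iff {a : α} :
    (∃ k, nsTrace g k = some a) ↔ ∃ i, g i = some a := by
  refine exists_subseq_eq_some_iff.trans ⟨fun ⟨i, _, hi⟩ ↦ ⟨i, hi⟩, fun h ↦ ?_⟩
  -- The first occurrence of a value is never a stutter.
  have first_ne (h0 : Nat.find h ≠ 0) : g (Nat.find h - 1) ≠ some a :=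
    Nat.find_min h (Nat.sub_one_lt h0)
  have first_eq : g (Nat.find h) = some a := Nat.find_spec h
  refine ⟨Nat.find h, ⟨by rw [first_eq, Option.isSome_some], ?_⟩, first_eq⟩
  rw [or_iff_not_imp_left, first_eq]
  exact fun h0 ↦ (first_ne h0).symm

end Subsequences

section Paths

variable {S₁ S₂ A : Type*}

theorem TPath.exists_labelSeq_eq_some_iff {l : Type*} {Tr : S₁ → A → S₁ → Prop} {p : TPath Tr}
    {L : S₁ → Set l} {a : Set l} :
    (∃ i, p.labelSeq L i = some a) ↔ ∃ i : ℕ, (i : ℕ∞) ≤ p.len ∧ L (p.states i) = a :=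
  exists_congr fun _ ↦ Option.ite_none_right_eq_some.trans (by rw [Option.some_inj])

theorem StutterEquiv.exists_label_iff {A₁ A₂ l : Type*} {Tr₁ : S₁ → A₁ → S₁ → Prop}
    {Tr₂ : S₂ → A₂ → S₂ → Prop} {L₁ : S₁ → Set l} {L₂ : S₂ → Set l} {p : TPath Tr₁} {q : TPath Tr₂}
    (h : StutterEquiv L₁ L₂ p q) (a : Set l) :
    (∃ i : ℕ, (i : ℕ∞) ≤ p.len ∧ L₁ (p.states i) = a) ↔
      ∃ i : ℕ, (i : ℕ∞) ≤ q.len ∧ L₂ (q.states i) = a := by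
  rw [← TPath.exists_labelSeq_eq_some_iff, ← exists_nsTrace_eq_some_iff, h.2,
    exists_nsTrace_eq_some_iff, TPath.exists_labelSeq_eq_some_iff]

theorem WeakEquiv.of_invisible_head {Tr₁ : S₁ → A → S₁ → Prop} {Tr₂ : S₂ → A → S₂ → Prop}
    {I : Set A} {p : TPath Tr₁} {q : TPath Tr₂} (hlen : q.len = p.len + 1) (hhead : q.acts 0 ∈ I)
    (htail : ∀ i : ℕ, (i : ℕ∞) < p.len → q.acts (i + 1) = p.acts i) :
    WeakEquiv I p q := by
  have succ_lt_len (i : ℕ) : (i : ℕ∞) + 1 < q.len ↔ (i : ℕ∞) < p.len := by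
    rw [hlen]
    exact ENat.add_lt_add_iff_right ENat.one_ne_top
  refine ⟨by simp [hlen], ?_⟩
  rw [← subseq_comp_of_strictMono (g := q.actSeq) (f := Nat.succ) (fun _ _ ↦ Nat.succ_lt_succ)]
  · congr 1
    · funext i
      by_cases hi : (i : ℕ∞) < p.len <;> simp [TPath.actSeq, succ_lt_len, hi, htail]
    · funext i
      simpa [succ_lt_len] using fun hi ↦ by rw [htail i hi]
  · rintro (_ | i) ⟨_, hvisible⟩
    · exact absurd hhead hvisible
    · exact Set.mem_range_self i

end Paths

/-- The structural transitions of `mergeNet`. -/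
inductive MergeTransition
  | merge
  | consume

open MergeTransition

noncomputable instance : Fintype MergeTransition where
  elems := {merge, consume}
  complete t := by cases t <;> simp

/-- The Petri net of the counterexample: one place, initially with two tokens, from which `merge`
takes two tokens and returns one, and `consume` takes one token. -/
def mergeNet : PetriNet Unit MergeTransition where
  pre
    | _, merge => 2
    | _, consume => 1
  post
    | merge, _ => 1
    | consume, _ => 0
  m0 _ := 2

/-- The labelling of markings by the single atomic proposition that the place is empty. -/
def emptyLabel (m : Unit → ℕ) : Set Unit := {_u | m () = 0}

theorem emptyLabel_eq_iff {m m' : Unit → ℕ} :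
    emptyLabel m = emptyLabel m' ↔ (m () = 0 ↔ m' () = 0) := by
  simp [emptyLabel, Set.ext_iff]

theorem mergeNet_fires_merge_iff {m m' : Unit → ℕ} :
    mergeNet.Fires m merge m' ↔ 2 ≤ m () ∧ m' () = m () - 2 + 1 := by
  simp [PetriNet.Fires, mergeNet, Unique.forall_iff]

theorem mergeNet_fires_consume_iff {m m' : Unit → ℕ} :
    mergeNet.Fires m consume m' ↔ 1 ≤ m () ∧ m' () = m () - 1 := by
  simp [PetriNet.Fires, mergeNet, Unique.forall_iff]

theorem emptyLabel_eq_of_fires_merge {m m' : Unit → ℕ} (h : mergeNet.Fires m merge m') :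
    emptyLabel m = emptyLabel m' := by
  rw [mergeNet_fires_merge_iff] at h
  rw [emptyLabel_eq_iff]
  omega

/-- The initial path of `mergeNet` that fires `consume` only, leaving one token. After `i` steps
`2 - i` tokens are left because both transitions decrease the number of tokens by one. -/
def consumePath : TPath mergeNet.Fires where
  states i _ := 2 - i
  acts _ := consume
  len := 1
  valid i hi := by
    obtain rfl : i = 0 := Nat.lt_one_iff.mp (by exact_mod_cast hi)
    exact mergeNet_fires_consume_iff.mpr ⟨by norm_num, rfl⟩

/-- The initial path of `mergeNet` that fires `merge` and then `consume`, leaving no token. -/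
def mergeConsumePath : TPath mergeNet.Fires where
  states i _ := 2 - i
  acts
    | 0 => merge
    | _ + 1 => consume
  len := 2
  valid i hi := by
    have hi : i < 2 := by exact_mod_cast hi
    interval_cases i
    · exact mergeNet_fires_merge_iff.mpr ⟨le_rfl, rfl⟩
    · exact mergeNet_fires_consume_iff.mpr ⟨le_rfl, rfl⟩

theorem consumePath_weakEquiv_mergeConsumePath {I : Set MergeTransition} (hI : merge ∈ I) :
    WeakEquiv I consumePath mergeConsumePath :=
  .of_invisible_head one_add_one_eq_two.symm hI fun _ _ ↦ rfl

theorem not_stutterEquiv_consumePath_mergeConsumePath :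
    ¬ StutterEquiv emptyLabel emptyLabel consumePath mergeConsumePath := by
  intro h
  obtain ⟨i, hi, hlabel⟩ := (h.exists_label_iff (emptyLabel 0)).mpr ⟨2, le_rfl, rfl⟩
  have hi : i ≤ 1 := Nat.cast_le_one.mp hi
  have place_empty : 2 - i = 0 := (emptyLabel_eq_iff.mp hlabel).mpr rfl
  omega

/-- Under ordinary invisibility, the LSTS underlying a Petri net is not
necessarily labelled consistently for arbitrary propositions: there exist a Petri net,
a labelling `L` of its markings by a single atomic proposition, and two initial paths
that are weakly equivalent w.r.t. the set of ordinarily invisible structural transitions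
but not stutter equivalent under `L`. -/
theorem petri_ordinary_invisibility_not_consistent :
    ∃ (P T : Type) (_ : Fintype P) (_ : Fintype T) (N : PetriNet P T)
      (L : (P → ℕ) → Set Unit) (p q : TPath N.Fires),
      p.states 0 = N.m0 ∧ q.states 0 = N.m0 ∧
      WeakEquiv {t : T | ∀ m m', N.Fires m t m' → L m = L m'} p q ∧
      ¬ StutterEquiv L L p q := by
  exact ⟨Unit, MergeTransition, inferInstance, inferInstance, mergeNet, emptyLabel,
    consumePath, mergeConsumePath, rfl, rfl,
    consumePath_weakEquiv_mergeConsumePath fun _ _ ↦ emptyLabel_eq_of_fires_merge,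
    not_stutterEquiv_consumePath_mergeConsumePath⟩
end
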